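/- The group Γ is nilpotent if and only if Γ is abelian. -/

import Mathlib

/-- The set of relators of the group `Γ` (on generators `α_0, …, α_{k-1}`, 0-indexed) from the
presentation of the fundamental group of a generalized real Bott manifold.  Here `l` plays the
role of the number of blocks of size at least two, and `a p q` is the entry `a_{p,1}^q`.
(Indices are 0-based: the paper's generator `α_j` corresponds to index `j - 1`.) -/
def gbmRels (k l : ℕ) (a : Fin k → Fin k → ZMod 2) : Set (FreeGroup (Fin k)) :=
  {r | (∃ p : Fin k, (p : ℕ) < l ∧ r = (FreeGroup.of p) ^ 2) ∨
       (∃ p q : Fin k, p < q ∧ (q : ℕ) < l ∧ r = (FreeGroup.of p * FreeGroup.of q) ^ 2) ∨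
       (∃ p q : Fin k, p < q ∧ l ≤ (p : ℕ) ∧
         r = (if a p q = 0 then
                FreeGroup.of p * FreeGroup.of q * (FreeGroup.of p)⁻¹ * (FreeGroup.of q)⁻¹
              else
                FreeGroup.of p * (FreeGroup.of q)⁻¹ * (FreeGroup.of p)⁻¹ * (FreeGroup.of q)⁻¹)) ∨
       (∃ p q : Fin k, p < q ∧ (p : ℕ) < l ∧ l ≤ (q : ℕ) ∧
         r = (if a p q = 0 then
                FreeGroup.of p * FreeGroup.of q * FreeGroup.of p * (FreeGroup.of q)⁻¹
              else
                (FreeGroup.of p * FreeGroup.of q) ^ 2))}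


theorem gbm_pow_mem {G : Type*} [Group G] (g x : G) (h : g * x * g⁻¹ = x⁻¹) (n : ℕ) :
    x ^ (2 ^ n) ∈ Subgroup.lowerCentralSeries (⊤ : Subgroup G) n := by
  induction n with
  | zero => simp
  | succ n ih =>
    have h1 : g * x ^ (2 ^ n) * g⁻¹ = (x ^ (2 ^ n))⁻¹ := by
      rw [← conj_pow, h, inv_pow]
    have h2 : x ^ (2 ^ (n + 1)) = x ^ (2 ^ n) * g * (x ^ (2 ^ n))⁻¹ * g⁻¹ := by
      have h3 : g * (x ^ (2 ^ n))⁻¹ * g⁻¹ = x ^ (2 ^ n) := by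
        have := congrArg (·⁻¹) h1
        simpa [mul_assoc] using this
      rw [mul_assoc, mul_assoc, ← mul_assoc g, h3, pow_succ, pow_mul, pow_two]
    rw [h2]
    rw [← commutatorElement_def]
    exact Subgroup.commutator_mem_commutator ih (Subgroup.mem_top g)

/-- images of the generators in the infinite dihedral group -/
def gbmMap {k : ℕ} (a : Fin k → Fin k → ZMod 2) (q i : Fin k) : DihedralGroup 0 :=
  if i < q then (if a i q = 0 then 1 else DihedralGroup.sr 0)
  else if i = q then DihedralGroup.r 1 else 1

theorem gbmMap_sq {k : ℕ} (a : Fin k → Fin k → ZMod 2) (q i : Fin k) (h : i ≠ q) :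
    gbmMap a q i * gbmMap a q i = 1 := by
  unfold gbmMap
  split_ifs <;> simp_all

theorem gbmMap_comm {k : ℕ} (a : Fin k → Fin k → ZMod 2) (q i j : Fin k) (h : i ≠ q)
    (h' : j ≠ q) : gbmMap a q i * gbmMap a q j = gbmMap a q j * gbmMap a q i := by
  unfold gbmMap
  split_ifs <;> simp_all

theorem gbmMap_rels {k l : ℕ} (a : Fin k → Fin k → ZMod 2) (q : Fin k) (hq : l ≤ (q : ℕ)) :
    ∀ r ∈ gbmRels k l a, FreeGroup.lift (gbmMap a q) r = 1 := by
  have inv : ∀ i, i ≠ q → (gbmMap a q i)⁻¹ = gbmMap a q i := fun i hi =>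
    inv_eq_of_mul_eq_one_left (gbmMap_sq a q i hi)
  have key : ∀ i j : Fin k, i ≠ q → j ≠ q →
      gbmMap a q i * gbmMap a q j * gbmMap a q i * gbmMap a q j = 1 := by
    intro i j hi hj
    rw [gbmMap_comm a q i j hi hj, mul_assoc (gbmMap a q j), gbmMap_sq a q i hi, mul_one,
      gbmMap_sq a q j hj]
  rintro r (⟨p, hp, rfl⟩ | ⟨p, s, hps, hs, rfl⟩ | ⟨p, s, hps, hp, rfl⟩ | ⟨p, s, hps, hp, hs, rfl⟩)
  · have : p ≠ q := by rintro rfl; omega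
    simp [pow_two, gbmMap_sq a q p this]
  · have h1 : p ≠ q := by rintro rfl; have : (p : ℕ) < s := hps; omega
    have h2 : s ≠ q := by rintro rfl; omega
    simp [pow_two, ← mul_assoc, key p s h1 h2]
  · by_cases h1 : p = q
    · subst h1
      have : gbmMap a p s = 1 := by
        simp [gbmMap, hps.ne', hps.le]
      split_ifs <;> simp [this]
    · by_cases h2 : s = q
      · subst h2
        split_ifs with h <;> simp [gbmMap, hps, h]
      · split_ifs <;> simp [inv p h1, inv s h2, key p s h1 h2]
  · have h1 : p ≠ q := by rintro rfl; omega
    by_cases h2 : s = q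
    · subst h2
      split_ifs with h <;> simp [gbmMap, hps, h, pow_two]
    · split_ifs <;> simp [inv s h2, pow_two, ← mul_assoc, key p s h1 h2]

theorem gbm_rel {k l : ℕ} {a : Fin k → Fin k → ZMod 2} {r : FreeGroup (Fin k)}
    (h : r ∈ gbmRels k l a) : PresentedGroup.mk (gbmRels k l a) r = 1 :=
  PresentedGroup.one_of_mem h

/-- The group `Γ` is nilpotent if and only if it is abelian. -/
theorem stmt_9 (k l : ℕ) (hk : 1 ≤ k) (hl : l ≤ k) (a : Fin k → Fin k → ZMod 2) :
    Group.IsNilpotent (PresentedGroup (gbmRels k l a)) ↔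
      (∀ x y : PresentedGroup (gbmRels k l a), x * y = y * x) := by
  have hsq : ∀ p : Fin k, (p : ℕ) < l →
      (PresentedGroup.of p : PresentedGroup (gbmRels k l a)) * PresentedGroup.of p = 1 := by
    intro p hp
    have := gbm_rel (k := k) (l := l) (a := a) (Or.inl ⟨p, hp, rfl⟩)
    rw [map_pow, pow_two] at this
    exact this
  constructor
  · intro hn
    have hz : ∀ p q : Fin k, p < q → l ≤ (q : ℕ) → a p q = 0 := by
      intro p q hpq hq
      by_contra hne
      have hconj : (PresentedGroup.of p : PresentedGroup (gbmRels k l a)) * PresentedGroup.of q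
          * (PresentedGroup.of p)⁻¹ = (PresentedGroup.of q)⁻¹ := by
        by_cases hp : (p : ℕ) < l
        · have := gbm_rel (k := k) (l := l) (a := a)
            (Or.inr (Or.inr (Or.inr ⟨p, q, hpq, hp, hq, rfl⟩)))
          rw [if_neg hne, map_pow, pow_two, map_mul, ← mul_assoc] at this
          rw [inv_eq_of_mul_eq_one_left (hsq p hp)]
          exact eq_inv_of_mul_eq_one_left this
        · have := gbm_rel (k := k) (l := l) (a := a)
            (Or.inr (Or.inr (Or.inl ⟨p, q, hpq, not_lt.mp hp, rfl⟩)))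
          rw [if_neg hne, map_mul, map_mul, map_mul, map_inv, map_inv] at this
          have h2 : (PresentedGroup.of p : PresentedGroup (gbmRels k l a))
            * (PresentedGroup.of q)⁻¹ * (PresentedGroup.of p)⁻¹ = PresentedGroup.of q :=
            mul_inv_eq_one.mp this
          have h3 := congrArg (·⁻¹) h2
          simpa [mul_assoc] using h3
      obtain ⟨n, hn⟩ := Subgroup.nilpotent_iff_lowerCentralSeries.mp hn
      have hm := gbm_pow_mem _ _ hconj n
      rw [hn, Subgroup.mem_bot] at hm
      have := congrArg (PresentedGroup.toGroup (gbmMap_rels a q hq)) hm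
      rw [map_pow, PresentedGroup.toGroup.of, map_one] at this
      have hr : gbmMap a q q = DihedralGroup.r 1 := by simp [gbmMap]
      rw [hr, DihedralGroup.r_one_pow, DihedralGroup.one_def] at this
      have h2 : ((2 ^ n : ℕ) : ZMod 0) = 0 := DihedralGroup.r.inj this
      have h3 : ((2 ^ n : ℕ) : ℤ) = 0 := h2
      exact absurd h3 (by positivity)
    have hlt : ∀ p q : Fin k, p < q →
        (PresentedGroup.of p : PresentedGroup (gbmRels k l a)) * PresentedGroup.of q
          = PresentedGroup.of q * PresentedGroup.of p := by
      intro p q hpq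
      by_cases hq : (q : ℕ) < l
      · have hp : (p : ℕ) < l := lt_trans hpq hq
        have := gbm_rel (k := k) (l := l) (a := a) (Or.inr (Or.inl ⟨p, q, hpq, hq, rfl⟩))
        rw [map_pow, pow_two, map_mul] at this
        have h2 := eq_inv_of_mul_eq_one_left this
        rw [mul_inv_rev] at h2
        refine h2.trans ?_
        exact congrArg₂ _ (inv_eq_of_mul_eq_one_left (hsq q hq))
          (inv_eq_of_mul_eq_one_left (hsq p hp))
      · have hq := not_lt.mp hq
        have h0 := hz p q hpq hq
        by_cases hp : (p : ℕ) < l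
        · have := gbm_rel (k := k) (l := l) (a := a)
            (Or.inr (Or.inr (Or.inr ⟨p, q, hpq, hp, hq, rfl⟩)))
          rw [if_pos h0, map_mul, map_mul, map_mul, map_inv] at this
          have h2 : (PresentedGroup.of p : PresentedGroup (gbmRels k l a))
            * PresentedGroup.of q * PresentedGroup.of p = PresentedGroup.of q :=
            mul_inv_eq_one.mp this
          have h3 := eq_mul_inv_of_mul_eq h2
          rwa [inv_eq_of_mul_eq_one_left (hsq p hp)] at h3
        · have := gbm_rel (k := k) (l := l) (a := a)
            (Or.inr (Or.inr (Or.inl ⟨p, q, hpq, not_lt.mp hp, rfl⟩)))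
          rw [if_pos h0, map_mul, map_mul, map_mul, map_inv, map_inv] at this
          exact mul_inv_eq_iff_eq_mul.mp (mul_inv_eq_one.mp this)
    have hgen : ∀ p q : Fin k,
        (PresentedGroup.of p : PresentedGroup (gbmRels k l a)) * PresentedGroup.of q
          = PresentedGroup.of q * PresentedGroup.of p := by
      intro p q
      rcases lt_trichotomy p q with h | h | h
      · exact hlt p q h
      · rw [h]
      · exact (hlt q p h).symm
    have htop := PresentedGroup.closure_range_of (gbmRels k l a)
    have h1 : ∀ (p : Fin k) (x : PresentedGroup (gbmRels k l a)),
        PresentedGroup.of p * x = x * PresentedGroup.of p := by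
      intro p x
      have : Subgroup.closure (Set.range PresentedGroup.of) ≤
          Subgroup.centralizer {(PresentedGroup.of p : PresentedGroup (gbmRels k l a))} := by
        rw [Subgroup.closure_le]
        rintro _ ⟨q, rfl⟩
        exact Subgroup.mem_centralizer_singleton_iff.mpr (hgen q p)
      rw [htop] at this
      exact (Subgroup.mem_centralizer_singleton_iff.mp (this (Subgroup.mem_top x))).symm
    intro x y
    have : Subgroup.closure (Set.range PresentedGroup.of) ≤ Subgroup.centralizer {y} := by
      rw [Subgroup.closure_le]
      rintro _ ⟨q, rfl⟩
      exact Subgroup.mem_centralizer_singleton_iff.mpr (h1 q y)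
    rw [htop] at this
    exact Subgroup.mem_centralizer_singleton_iff.mp (this (Subgroup.mem_top x))
  · intro h
    letI : CommGroup (PresentedGroup (gbmRels k l a)) :=
      { (inferInstance : Group (PresentedGroup (gbmRels k l a))) with mul_comm := h }
    exact CommGroup.isNilpotent
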